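/- Let k ≥ 2, n = 2k, and let x be a position of Nim^=_{2k,k}. Suppose x → x' and x → x'' are moves with x''_i ≤ x'_i for all i and y(x') ≥ y(x''). Then for every integer g with y(x'') ≤ g ≤ y(x') there exists a move x → x''' such that y(x''') = g and x''_i ≤ x'''_i ≤ x'_i for all i. -/

import Mathlib

/-- A move in Exact k-Nim `Nim^=_{n,k}`: all piles weakly decrease and
exactly `k` piles strictly decrease. -/
def ExactMove (n k : ℕ) (x x' : Fin n → ℕ) : Prop :=
  (∀ i, x' i ≤ x i) ∧ (Finset.univ.filter fun i => x' i < x i).card = k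

/-- There is a chain of `m` consecutive moves starting at `x`. -/
def HasChain (n k : ℕ) (x : Fin n → ℕ) (m : ℕ) : Prop :=
  ∃ f : Fin (m + 1) → Fin n → ℕ, f 0 = x ∧
    ∀ i : Fin m, ExactMove n k (f i.castSucc) (f i.succ)

/-- The Tetris function `T_{n,k}(x)`: the maximum number of consecutive moves
that can be made starting from `x`. -/
noncomputable def tetris (n k : ℕ) (x : Fin n → ℕ) : ℕ :=
  sSup {m | HasChain n k x m}

/-- `m(x)`: the minimum pile size of the position `x`. -/
noncomputable def mval (n : ℕ) (x : Fin n → ℕ) : ℕ := sInf (Set.range x)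

/-- `y(x) = T_{n,k}(x₁ - m(x), …, xₙ - m(x))`. -/
noncomputable def yval (n k : ℕ) (x : Fin n → ℕ) : ℕ :=
  tetris n k fun i => x i - mval n x

/-- `z(x) = 1 + C(y(x)+1, 2)`. -/
noncomputable def zval (n k : ℕ) (x : Fin n → ℕ) : ℕ :=
  1 + (yval n k x + 1).choose 2

theorem hasChain_zero (n k : ℕ) (x : Fin n → ℕ) : HasChain n k x 0 :=
  ⟨fun _ => x, rfl, fun i => i.elim0⟩

theorem hasChain_succ (n k m : ℕ) (x : Fin n → ℕ) :
    HasChain n k x (m + 1) ↔ ∃ x1, ExactMove n k x x1 ∧ HasChain n k x1 m := by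
  constructor
  · rintro ⟨f, h0, hf⟩
    refine ⟨f 1, ?_, fun i => f i.succ, rfl, fun i => ?_⟩
    · have := hf 0
      rw [← h0]
      simpa using this
    · have := hf i.succ
      simpa using this
  · rintro ⟨x1, hm, f, h0, hf⟩
    refine ⟨Fin.cons x f, rfl, fun i => ?_⟩
    refine Fin.cases ?_ (fun j => ?_) i
    · simpa [h0] using hm
    · have := hf j
      simpa [← Fin.succ_castSucc] using this

theorem hasChain_mono (n k m : ℕ) : ∀ (v w : Fin n → ℕ), (∀ i, v i ≤ w i) →
    HasChain n k v m → HasChain n k w m := by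
  induction m with
  | zero => intro v w _ _; exact hasChain_zero n k w
  | succ m ih =>
    intro v w hvw h
    rw [hasChain_succ] at h ⊢
    obtain ⟨v1, ⟨hle, hc⟩, hch⟩ := h
    refine ⟨fun i => w i - (v i - v1 i), ⟨fun i => Nat.sub_le _ _, ?_⟩, ih v1 _ (fun i => ?_) hch⟩
    · rw [← hc]
      congr 1
      ext i
      have := hle i
      have := hvw i
      simp only [Finset.mem_filter, Finset.mem_univ, true_and]
      omega
    · have := hle i
      have := hvw i
      show v1 i ≤ w i - (v i - v1 i)
      omega

theorem hasChain_drop (n k m : ℕ) (i : Fin n) : ∀ (v : Fin n → ℕ), 1 ≤ v i →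
    HasChain n k v (m + 1) → HasChain n k (Function.update v i (v i - 1)) m := by
  induction m with
  | zero => intro v _ _; exact hasChain_zero n k _
  | succ m ih =>
    intro v hv h
    rw [hasChain_succ] at h
    obtain ⟨v1, ⟨hle, hc⟩, hch⟩ := h
    by_cases hi : v1 i < v i
    · refine hasChain_mono n k _ v1 _ (fun j => ?_) hch
      rcases eq_or_ne j i with rfl | hj
      · simp; omega
      · simpa [hj] using hle j
    · have hle' := hle i
      have hvi : v1 i = v i := by omega
      rw [hasChain_succ]
      refine ⟨_, ⟨fun j => ?_, ?_⟩, ih v1 (by omega) hch⟩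
      · rcases eq_or_ne j i with rfl | hj
        · simp [hvi]
        · simpa [hj] using hle j
      · rw [← hc]
        congr 1
        ext j
        rcases eq_or_ne j i with rfl | hj
        · simp [hvi]
        · simp [hj]

theorem hasChain_le_sum (n k m : ℕ) (hk : 1 ≤ k) : ∀ (v : Fin n → ℕ),
    HasChain n k v m → m ≤ ∑ i, v i := by
  induction m with
  | zero => intro v _; exact Nat.zero_le _
  | succ m ih =>
    intro v h
    rw [hasChain_succ] at h
    obtain ⟨v1, ⟨hle, hc⟩, hch⟩ := h
    have h1 := ih v1 hch
    have hne : (Finset.univ.filter fun i => v1 i < v i).Nonempty := by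
      rw [← Finset.card_pos]; omega
    obtain ⟨i, hi⟩ := hne
    have : ∑ i, v1 i < ∑ i, v i :=
      Finset.sum_lt_sum (fun i _ => hle i) ⟨i, Finset.mem_univ i, by simpa using hi⟩
    omega

theorem tetris_bdd (n k : ℕ) (hk : 1 ≤ k) (v : Fin n → ℕ) :
    BddAbove {m | HasChain n k v m} :=
  ⟨∑ i, v i, fun m hm => hasChain_le_sum n k m hk v hm⟩

theorem le_tetris (n k : ℕ) (hk : 1 ≤ k) (v : Fin n → ℕ) (m : ℕ) (h : HasChain n k v m) :
    m ≤ tetris n k v := le_csSup (tetris_bdd n k hk v) h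

theorem tetris_chain (n k : ℕ) (hk : 1 ≤ k) (v : Fin n → ℕ) : HasChain n k v (tetris n k v) :=
  Nat.sSup_mem (s := {m | HasChain n k v m}) ⟨0, hasChain_zero n k v⟩ (tetris_bdd n k hk v)

theorem mval_le (n : ℕ) (v : Fin n → ℕ) (i : Fin n) : mval n v ≤ v i :=
  Nat.sInf_le ⟨i, rfl⟩

theorem exists_mval (n : ℕ) (v : Fin n → ℕ) (i : Fin n) : ∃ j, v j = mval n v :=
  Nat.sInf_mem (s := Set.range v) ⟨v i, i, rfl⟩

theorem yval_step (n k : ℕ) (hk : 1 ≤ k) (v : Fin n → ℕ) (i : Fin n) (hi : 1 ≤ v i) :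
    yval n k v ≤ yval n k (Function.update v i (v i - 1)) + 1 := by
  set w := Function.update v i (v i - 1) with hw
  have hwi : w i = v i - 1 := by simp [hw]
  have hwj : ∀ j, j ≠ i → w j = v j := fun j hj => by simp [hw, hj]
  have hch := tetris_chain n k hk (fun j => v j - mval n v)
  have hyv : tetris n k (fun j => v j - mval n v) = yval n k v := rfl
  rw [hyv] at hch
  obtain ⟨a, ha⟩ := exists_mval n v i
  obtain ⟨b, hb⟩ := exists_mval n w i
  have hmi := mval_le n v i
  have hmb := mval_le n v b
  have hwmi := mval_le n w i
  have hwma := mval_le n w a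
  by_cases hm : v i = mval n v
  · have : mval n w + 1 ≤ mval n v := by omega
    have := le_tetris n k hk (fun j => w j - mval n w) _
      (hasChain_mono n k _ _ _ (fun j => ?_) hch)
    · change yval n k v ≤ yval n k w at this
      omega
    · show v j - mval n v ≤ w j - mval n w
      rcases eq_or_ne j i with rfl | hj
      · omega
      · rw [hwj j hj]; omega
  · have hai : a ≠ i := by rintro rfl; exact hm ha
    have hwa := hwj a hai
    have hmm : mval n w ≤ mval n v := by omega
    rcases Nat.eq_zero_or_pos (yval n k v) with h0 | h0
    · omega
    obtain ⟨t, ht⟩ : ∃ t, yval n k v = t + 1 := ⟨yval n k v - 1, by omega⟩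
    rw [ht] at hch
    have h2 := hasChain_drop n k t i _ (by show 1 ≤ v i - mval n v; omega) hch
    have := le_tetris n k hk (fun j => w j - mval n w) _
      (hasChain_mono n k _ _ _ (fun j => ?_) h2)
    · change t ≤ yval n k w at this
      omega
    · rcases eq_or_ne j i with rfl | hj
      · simp only [Function.update_self]; omega
      · simp only [Function.update_of_ne hj, hwj j hj]; omega

theorem yval_ivt (n k : ℕ) (hk : 1 ≤ k) (u : Fin n → ℕ) (g : ℕ) (hg : yval n k u ≤ g) (N : ℕ) :
    ∀ v : Fin n → ℕ, (∀ i, u i ≤ v i) → ∑ i, v i ≤ N → g ≤ yval n k v →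
      ∃ z, yval n k z = g ∧ (∀ i, u i ≤ z i) ∧ ∀ i, z i ≤ v i := by
  induction N with
  | zero =>
    intro v huv hN hgv
    have : u = v := by
      ext i
      have h1 := huv i
      have h2 := Finset.single_le_sum (f := v) (fun i _ => Nat.zero_le _) (Finset.mem_univ i)
      omega
    subst this
    exact ⟨u, by omega, fun _ => le_rfl, fun _ => le_rfl⟩
  | succ N ih =>
    intro v huv hN hgv
    by_cases he : yval n k v = g
    · exact ⟨v, he, huv, fun _ => le_rfl⟩
    have : ∃ i, u i < v i := by
      by_contra! hc
      have : u = v := funext fun i => le_antisymm (huv i) (hc i)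
      subst this
      omega
    obtain ⟨i, hi⟩ := this
    have hs := yval_step n k hk v i (by omega)
    have hwle : ∀ j, Function.update v i (v i - 1) j ≤ v j := fun j => by
      rcases eq_or_ne j i with rfl | hj
      · simp
      · simp [hj]
    have hlt : ∑ j, Function.update v i (v i - 1) j < ∑ j, v j :=
      Finset.sum_lt_sum (fun j _ => hwle j) ⟨i, Finset.mem_univ i, by simp; omega⟩
    obtain ⟨z, h1, h2, h3⟩ := ih (Function.update v i (v i - 1)) (fun j => by
      rcases eq_or_ne j i with rfl | hj
      · simp; omega
      · simpa [hj] using huv j) (by omega) (by omega)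
    exact ⟨z, h1, h2, fun j => (h3 j).trans (hwle j)⟩

/-- Continuity lemma: given moves `x → x'` and `x → x''` with `x'' ≤ x'` and
`y(x'') ≤ y(x')`, every intermediate value `g` of `y` is attained by some move
`x → x'''` with `x'' ≤ x''' ≤ x'`. -/
theorem yval_intermediate (k : ℕ) (hk : 2 ≤ k) (x x' x'' : Fin (2 * k) → ℕ)
    (h1 : ExactMove (2 * k) k x x') (h2 : ExactMove (2 * k) k x x'')
    (hle : ∀ i, x'' i ≤ x' i)
    (hy : yval (2 * k) k x'' ≤ yval (2 * k) k x')
    (g : ℕ) (hg1 : yval (2 * k) k x'' ≤ g) (hg2 : g ≤ yval (2 * k) k x') :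
    ∃ x''' : Fin (2 * k) → ℕ, ExactMove (2 * k) k x x''' ∧
      yval (2 * k) k x''' = g ∧ (∀ i, x'' i ≤ x''' i) ∧ (∀ i, x''' i ≤ x' i) := by
  obtain ⟨z, h3, h4, h5⟩ := yval_ivt (2 * k) k (by omega) x'' g hg1 _ x' hle le_rfl hg2
  refine ⟨z, ⟨fun i => (h5 i).trans (h1.1 i), ?_⟩, h3, h4, h5⟩
  apply le_antisymm
  · refine le_trans ?_ h2.2.le
    refine Finset.card_le_card (fun i => ?_)
    simp only [Finset.mem_filter, Finset.mem_univ, true_and]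
    exact fun h => (h4 i).trans_lt h
  · refine le_trans h1.2.ge ?_
    refine Finset.card_le_card (fun i => ?_)
    simp only [Finset.mem_filter, Finset.mem_univ, true_and]
    exact fun h => (h5 i).trans_lt h
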